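/- For every positive integer n and every field K, there exists an invertible alternate matrix A ∈ M_{2n}(K) such that J^T A J = A, where J = J_{2n}(1) is the 2n×2n Jordan block with eigenvalue 1. -/

import Mathlib

open Matrix

/-- The Jordan block of size `m` with eigenvalue `1`. -/
def jordanOne (K : Type*) [Field K] (m : ℕ) : Matrix (Fin m) (Fin m) K :=
  Matrix.of fun i j => if (i : ℕ) = j ∨ (i : ℕ) + 1 = j then 1 else 0

/-- upper part -/
def uEnt (n i j : ℕ) : ℤ := if i < n ∧ n ≤ j then (-1) ^ j * ((j - n).choose (n - 1 - i) : ℤ) else 0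

def aEnt (n i j : ℕ) : ℤ := uEnt n i j - uEnt n j i

lemma aEnt_zero (n i j : ℕ) (h : i + j + 1 < 2 * n) : aEnt n i j = 0 := by
  have key : ∀ i j : ℕ, i + j + 1 < 2 * n → uEnt n i j = 0 := by
    intro i j h
    unfold uEnt
    split_ifs with h1
    · rw [Nat.choose_eq_zero_of_lt (by omega)]; simp
    · rfl
  unfold aEnt
  rw [key i j h, key j i (by omega)]; rfl

lemma aEnt_anti (n i j : ℕ) (h : i + j + 1 = 2 * n) : IsUnit (aEnt n i j) := by
  unfold aEnt uEnt
  rcases Nat.lt_or_ge i n with h1 | h1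
  · rw [if_pos ⟨h1, by omega⟩, if_neg (by omega), show j - n = n - 1 - i by omega]
    simp [isUnit_neg_one.pow]
  · rw [if_neg (by omega), if_pos ⟨by omega, h1⟩, show i - n = n - 1 - j by omega]
    simp [isUnit_neg_one.pow]

lemma aEnt_rec (n i j : ℕ) :
    i + 1 < 2 * n → j + 1 < 2 * n → aEnt n (i+1) j + aEnt n i (j+1) + aEnt n i j = 0 := by
  have key : ∀ i j : ℕ, i + 1 < n → n ≤ j →
      uEnt n (i+1) j + uEnt n i (j+1) + uEnt n i j = 0 := by
    intro i j hi hj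
    unfold uEnt
    rw [if_pos ⟨hi, hj⟩, if_pos ⟨by omega, by omega⟩, if_pos ⟨by omega, by omega⟩]
    obtain ⟨s, rfl⟩ : ∃ s, n = i + 2 + s := ⟨n - (i+2), by omega⟩
    obtain ⟨t, rfl⟩ : ∃ t, j = i + 2 + s + t := ⟨j - (i+2+s), by omega⟩
    rw [show i + 2 + s + t + 1 - (i+2+s) = t + 1 by omega,
      show i + 2 + s + t - (i+2+s) = t by omega,
      show i + 2 + s - 1 - (i+1) = s by omega, show i + 2 + s - 1 - i = s + 1 by omega,
      Nat.choose_succ_succ, pow_succ]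
    push_cast; ring
  have z : ∀ i j : ℕ, ¬ (i < n ∧ n ≤ j) → uEnt n i j = 0 := fun i j h => if_neg h
  have e : ∀ j : ℕ, n ≤ j → 0 < n → uEnt n (n-1) j = (-1)^j := by
    intro j h h0
    unfold uEnt; rw [if_pos ⟨by omega, h⟩]; simp
  have c : ∀ i : ℕ, i + 1 < n → uEnt n i n = 0 := by
    intro i h
    unfold uEnt; rw [Nat.choose_eq_zero_of_lt (by omega)]; simp
  have main : ∀ i j : ℕ, i < n → n ≤ j →
      aEnt n (i+1) j + aEnt n i (j+1) + aEnt n i j = 0 := by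
    intro i j hi hj
    unfold aEnt
    rw [z j (i+1) (by omega), z (j+1) i (by omega), z j i (by omega)]
    by_cases h : i + 1 < n
    · linarith [key i j h hj]
    · obtain rfl : i = n - 1 := by omega
      rw [z (n-1+1) j (by omega), e _ (by omega) (by omega), e _ hj (by omega), pow_succ]; ring
  have anti : ∀ i j, aEnt n i j = - aEnt n j i := by intro i j; unfold aEnt; ring
  intro hi hj
  rcases Nat.lt_or_ge i n with h1 | h1 <;> rcases Nat.lt_or_ge j n with h2 | h2
  · by_cases h3 : i + 1 < n
    · by_cases h4 : j + 1 < n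
      · rw [aEnt_zero, aEnt_zero, aEnt_zero] <;> first | rfl | omega
      · rw [aEnt_zero, aEnt_zero, aEnt_zero] <;> first | rfl | omega
    · by_cases h4 : j + 1 < n
      · rw [aEnt_zero, aEnt_zero, aEnt_zero] <;> first | rfl | omega
      · obtain rfl : i = j := by omega
        rw [anti (i+1) i]; unfold aEnt; ring
  · exact main i j h1 h2
  · have := main j i h2 h1
    rw [anti (i+1) j, anti i (j+1), anti i j]; linarith
  · unfold aEnt
    rw [z (i+1) j (by omega), z j (i+1) (by omega), z i (j+1) (by omega), z (j+1) i (by omega),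
      z i j (by omega), z j i (by omega)]
    rfl

lemma sum_jordan {K : Type*} [Field K] (m : ℕ) (f : ℕ → K) (j : Fin m) :
    ∑ k : Fin m, f k * jordanOne K m k j = f j + if (j : ℕ) = 0 then 0 else f (j - 1) := by
  have h1 : ∀ k : Fin m, f k * jordanOne K m k j =
      (if k = j then f k else 0) + (if (k : ℕ) + 1 = j then f k else 0) := by
    intro k
    simp only [jordanOne, Matrix.of_apply, Fin.ext_iff]
    split_ifs <;> first | omega | simp
  simp_rw [h1, Finset.sum_add_distrib]
  congr 1
  · simp
  · split_ifs with h
    · exact Finset.sum_eq_zero fun k _ => if_neg (by omega)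
    · rw [Finset.sum_eq_single (⟨j - 1, by omega⟩ : Fin m)]
      · rw [if_pos (by simp only; omega)]
      · intro b _ hb
        refine if_neg fun h' => hb (Fin.ext ?_)
        simp only; omega
      · simp

theorem exists_alternate_for_even_jordan {K : Type*} [Field K] (n : ℕ) (hn : 0 < n) :
    ∃ A : Matrix (Fin (2 * n)) (Fin (2 * n)) K,
      IsUnit A.det ∧ (∀ X : Fin (2 * n) → K, X ⬝ᵥ (A *ᵥ X) = 0) ∧
      (jordanOne K (2 * n))ᵀ * A * jordanOne K (2 * n) = A := by
  refine ⟨Matrix.of fun i j => (aEnt n i j : K), ?_, ?_, ?_⟩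
  · set A : Matrix (Fin (2 * n)) (Fin (2 * n)) K := Matrix.of fun i j => (aEnt n i j : K) with hA
    have h := Matrix.det_permute' (Fin.revPerm (n := 2 * n)) A
    have ht : (A.submatrix id (Fin.revPerm (n := 2 * n))).det =
        ∏ i, (A.submatrix id (Fin.revPerm (n := 2 * n))) i i := by
      apply Matrix.det_of_lowerTriangular
      intro i j hij
      have hij' : (i : ℕ) < j := hij
      simp only [Matrix.submatrix_apply, hA, Matrix.of_apply, id, Fin.revPerm_apply, Fin.val_rev]
      rw [aEnt_zero _ _ _ (by omega)]; simp
    have hu : IsUnit (∏ i, (A.submatrix id (Fin.revPerm (n := 2 * n))) i i) := by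
      rw [IsUnit.prod_iff]
      intro i _
      simp only [Matrix.submatrix_apply, hA, Matrix.of_apply, id, Fin.revPerm_apply, Fin.val_rev]
      exact (aEnt_anti n i _ (by omega)).map (Int.castRingHom K)
    rw [← ht, h] at hu
    exact isUnit_of_mul_isUnit_right hu
  · intro X
    have : (Matrix.of fun i j : Fin (2*n) => (aEnt n i j : K)) =
        (Matrix.of fun i j : Fin (2*n) => (uEnt n i j : K)) -
        (Matrix.of fun i j : Fin (2*n) => (uEnt n i j : K))ᵀ := by
      ext i j; simp [aEnt]
    rw [this, Matrix.sub_mulVec, dotProduct_sub, Matrix.mulVec_transpose, dotProduct_comm X (X ᵥ* _),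
      Matrix.dotProduct_mulVec, sub_self]
  · ext i j
    rw [Matrix.mul_assoc, Matrix.mul_apply]
    have h1 : ∀ k : Fin (2*n), ((Matrix.of fun i j : Fin (2*n) => (aEnt n i j : K)) *
        jordanOne K (2*n)) k j = (aEnt n k j : K) + if (j : ℕ) = 0 then 0 else (aEnt n k (j-1) : K) := by
      intro k
      rw [Matrix.mul_apply]
      exact sum_jordan (2*n) (fun l => (aEnt n k l : K)) j
    simp_rw [h1, Matrix.transpose_apply, mul_comm (jordanOne K (2*n) _ i)]
    rw [sum_jordan (2*n) (fun k => (aEnt n k j : K) + if (j : ℕ) = 0 then 0 else (aEnt n k (j-1) : K)) i]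
    simp only [Matrix.of_apply]
    obtain ⟨i, hi⟩ := i
    obtain ⟨j, hj⟩ := j
    rcases i with _ | i <;> rcases j with _ | j
    · simp
    · simp [aEnt_zero n 0 j (by omega)]
    · simp [aEnt_zero n i 0 (by omega)]
    · have := congrArg (Int.cast : ℤ → K) (aEnt_rec n i j hi hj)
      push_cast at this
      simp
      linear_combination this
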